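/- Let α ∈ (0,1), let (α_n) be a sequence in (0,1) with n·α_n → α as n → ∞, and let c_n be defined by Φ(−c_n) = α_n. Then c_n → ∞ and c_n²/(2·log n) → 1 as n → ∞. -/

import Mathlib

open MeasureTheory Filter

/-- The standard normal density. -/
noncomputable def phi (x : ℝ) : ℝ := (Real.sqrt (2 * Real.pi))⁻¹ * Real.exp (-x ^ 2 / 2)

/-- The standard normal cumulative distribution function. -/
noncomputable def Phi (x : ℝ) : ℝ := ∫ t in Set.Iic x, phi t

/-- d(ρ,c,z) = (c + √ρ·z)/√(1−ρ). -/
noncomputable def dd (ρ c z : ℝ) : ℝ := (c + Real.sqrt ρ * z) / Real.sqrt (1 - ρ)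

/-- G(ρ,c,z) = (c + z/√ρ)/(2(1−ρ)^{3/2}). -/
noncomputable def G (ρ c z : ℝ) : ℝ :=
  (c + z / Real.sqrt ρ) / (2 * (1 - ρ) ^ ((3 : ℝ) / 2))

/-- H_n(ρ,c) = ∫ Φ(d(ρ,c,z))^n φ(z) dz. -/
noncomputable def Hn (n : ℕ) (ρ c : ℝ) : ℝ := ∫ z : ℝ, (Phi (dd ρ c z)) ^ n * phi z


lemma phi_pos' (x : ℝ) : 0 < phi x := by
  unfold phi; positivity

lemma phi_cont' : Continuous phi := by
  unfold phi; fun_prop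

lemma phi_int' : Integrable phi := by
  have h := (integrable_exp_neg_mul_sq (b := 1/2) (by norm_num)).const_mul (Real.sqrt (2 * Real.pi))⁻¹
  refine h.congr (Eventually.of_forall fun x => ?_)
  simp only [phi]
  congr 2; ring

lemma Phi_mono' {x y : ℝ} (h : x ≤ y) : Phi x ≤ Phi y := by
  unfold Phi
  exact setIntegral_mono_set phi_int'.integrableOn
    (Eventually.of_forall fun x => (phi_pos' x).le)
    (Set.Iic_subset_Iic.2 h).eventuallyLE

lemma Phi_lower' {x : ℝ} (hx : 0 ≤ x) : phi (x + 1) ≤ Phi (-x) := by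
  have h1 : ∫ t in Set.Icc (-x-1) (-x), phi t ≤ Phi (-x) := by
    unfold Phi
    exact setIntegral_mono_set phi_int'.integrableOn
      (Eventually.of_forall fun x => (phi_pos' x).le)
      (Set.Icc_subset_Iic_self).eventuallyLE
  have h2 : ∫ t in Set.Icc (-x-1) (-x), phi (x+1) ≤ ∫ t in Set.Icc (-x-1) (-x), phi t := by
    refine setIntegral_mono_on (by simp) phi_int'.integrableOn measurableSet_Icc ?_
    intro t ht
    unfold phi
    have : t ^ 2 ≤ (x+1)^2 := by nlinarith [ht.1, ht.2]
    gcongr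
  have h3 : ∫ t in Set.Icc (-x-1) (-x), phi (x+1) = phi (x+1) := by
    simp
  linarith

lemma Phi_upper' {x : ℝ} (hx : 0 ≤ x) : Phi (-x) ≤ Real.exp (-x^2/2) * ∫ t, phi t := by
  have hi : Integrable (fun t => phi (t + x)) := phi_int'.comp_add_right x
  have h1 : Phi (-x) ≤ ∫ t in Set.Iic (-x), Real.exp (-x^2/2) * phi (t + x) := by
    unfold Phi
    refine setIntegral_mono_on phi_int'.integrableOn (hi.const_mul _).integrableOn
      measurableSet_Iic ?_
    intro t ht
    have ht' : t ≤ -x := ht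
    unfold phi
    rw [mul_left_comm, ← Real.exp_add]
    gcongr
    nlinarith
  have h2 : ∫ t in Set.Iic (-x), Real.exp (-x^2/2) * phi (t + x)
      ≤ ∫ t, Real.exp (-x^2/2) * phi (t + x) :=
    setIntegral_le_integral (hi.const_mul _)
      (Eventually.of_forall fun t => mul_nonneg (Real.exp_pos _).le (phi_pos' _).le)
  have h3 : ∫ t, Real.exp (-x^2/2) * phi (t + x) = Real.exp (-x^2/2) * ∫ t, phi t := by
    rw [integral_const_mul, integral_add_right_eq_self phi x]
  linarith

theorem cn_tendsto_atTop_and_sq_div_log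
    (α : ℝ) (hα : α ∈ Set.Ioo (0:ℝ) 1)
    (αseq : ℕ → ℝ) (hαseq : ∀ n, αseq n ∈ Set.Ioo (0:ℝ) 1)
    (hlim : Tendsto (fun n : ℕ => (n : ℝ) * αseq n) atTop (nhds α))
    (c : ℕ → ℝ) (hc : ∀ n, Phi (-(c n)) = αseq n) :
    Tendsto c atTop atTop ∧
      Tendsto (fun n : ℕ => (c n) ^ 2 / (2 * Real.log n)) atTop (nhds 1) := by
  have hα0 : Tendsto αseq atTop (nhds 0) := by
    have h := hlim.mul (tendsto_inv_atTop_nhds_zero_nat (𝕜 := ℝ))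
    rw [mul_zero] at h
    refine h.congr' ?_
    filter_upwards [eventually_gt_atTop 0] with n hn
    have : (n:ℝ) ≠ 0 := by positivity
    field_simp
  have hcT : Tendsto c atTop atTop := by
    rw [tendsto_atTop]
    intro R
    have hp : 0 < Phi (-(max R 0)) :=
      (phi_pos' _).trans_le (Phi_lower' (le_max_right R 0))
    filter_upwards [hα0.eventually_lt_const hp] with n hn
    by_contra! hlt
    have : Phi (-(max R 0)) ≤ Phi (-(c n)) :=
      Phi_mono' (neg_le_neg (hlt.le.trans (le_max_left _ _)))
    rw [hc] at this
    linarith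
  refine ⟨hcT, ?_⟩
  set K := (Real.sqrt (2 * Real.pi))⁻¹ with hK
  have hK0 : 0 < K := by positivity
  set M := ∫ t, phi t with hM
  have hM0 : 0 < M := by
    have h := Phi_upper' le_rfl
    have h2 := (phi_pos' _).trans_le (Phi_lower' (le_refl (0:ℝ)))
    simp at h h2
    linarith
  have hL : Tendsto (fun n : ℕ => 2 * Real.log n) atTop atTop :=
    (Real.tendsto_log_atTop.comp tendsto_natCast_atTop_atTop).const_mul_atTop (by norm_num)
  have hlog : Tendsto (fun n : ℕ => Real.log ((n:ℝ) * αseq n)) atTop (nhds (Real.log α)) :=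
    hlim.log hα.1.ne'
  have hlim1 : ∀ A : ℝ, Tendsto (fun n : ℕ =>
      1 + 2 * (Real.log A - Real.log ((n:ℝ) * αseq n)) / (2 * Real.log n)) atTop (nhds 1) := by
    intro A
    have := (((hlog.const_sub (Real.log A)).const_mul 2).div_atTop hL).const_add 1
    simpa using this
  have hr : Tendsto (fun n : ℕ => (1 - 1 / (c n + 1)) ^ 2) atTop (nhds 1) := by
    have h1 : Tendsto (fun n => 1 / (c n + 1)) atTop (nhds 0) :=
      (tendsto_const_nhds (x := (1:ℝ))).div_atTop (tendsto_atTop_add_const_right _ 1 hcT)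
    simpa using (h1.const_sub 1).pow 2
  have hlow := (hlim1 K).mul hr
  rw [mul_one] at hlow
  refine tendsto_of_tendsto_of_tendsto_of_le_of_le' hlow (hlim1 M) ?_ ?_
  · filter_upwards [hL.eventually_gt_atTop 0, hcT.eventually_ge_atTop 0, eventually_gt_atTop 0]
      with n hLn hcn hn
    have hn' : (n:ℝ) ≠ 0 := by positivity
    have h := Phi_lower' hcn
    rw [hc] at h
    have h' := Real.log_le_log (phi_pos' _) h
    have e : Real.log (phi (c n + 1)) = Real.log K + -(c n + 1)^2/2 := by
      unfold phi
      rw [Real.log_mul hK0.ne' (Real.exp_pos _).ne', Real.log_exp]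
    rw [e] at h'
    rw [Real.log_mul hn' (hαseq n).1.ne']
    have e2 : (c n)^2 / (2 * Real.log n) =
        ((c n + 1)^2 / (2 * Real.log n)) * (1 - 1 / (c n + 1)) ^ 2 := by
      have : c n + 1 ≠ 0 := by positivity
      have : Real.log n ≠ 0 := by intro h0; simp [h0] at hLn
      field_simp
      ring
    rw [e2]
    gcongr
    rw [le_div_iff₀ hLn, add_mul, div_mul_cancel₀ _ hLn.ne']
    linarith
  · filter_upwards [hL.eventually_gt_atTop 0, hcT.eventually_ge_atTop 0, eventually_gt_atTop 0]
      with n hLn hcn hn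
    have hn' : (n:ℝ) ≠ 0 := by positivity
    have h := Phi_upper' hcn
    rw [hc] at h
    have h' := Real.log_le_log (hαseq n).1 h
    rw [Real.log_mul (Real.exp_pos _).ne' hM0.ne', Real.log_exp] at h'
    rw [Real.log_mul hn' (hαseq n).1.ne']
    rw [← sub_nonneg, ← div_self hLn.ne', ← add_div, ← sub_div]
    apply div_nonneg _ hLn.le
    linarith
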